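/- Let β > 0, let (x_k)_{k≥1} be nonnegative differentiable functions on [0,∞) with x_k(0) = 0, and let (r_k)_{k≥1}, (α_k)_{k≥1} be constants with r_k ≥ 0 and α_k > 0, such that for every k ≥ 1 and every t ≥ 0 one has x_k'(t) ≤ β·k·(α_k·x_{k+1}(t) − x_k(t)) + r_k. Then for all 0 ≤ t₀ ≤ t and all integers j ≥ 1, ℓ ≥ 1 with j ≤ e^{-2βt-6}·ℓ, one has x_j(t) ≤ A^ℓ_j · exp(−e^{-2β(t−t₀)−3}·ℓ) · sup_{s ∈ [t₀,t]} x_{j+ℓ}(s) + A^ℓ_j · e^{2βt+7} · exp(−e^{-2βt−7}·ℓ) · sup_{s ∈ [0,t₀]} x_{j+ℓ}(s) + (1/β) · Σ_{k=0}^{ℓ-1} A^{k+1}_j · I^{k+1}_j(t) · r_{j+k} / (α_{j+k}·(j+k)), where A^k_j := Π_{i=j}^{j+k-1} α_i (with A^0_j := 1). -/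

import Mathlib

open MeasureTheory

/-- The nested integral `∫₀^t ∫₀^{s_ℓ} ⋯ ∫₀^{s_2} e^{-β(s_2+⋯+s_ℓ)} e^{a s_1} ds_1 ⋯ ds_ℓ`,
defined recursively in the number `ℓ` of integrations. -/
noncomputable def nestInt (β a : ℝ) : ℕ → ℝ → ℝ
  | 0, _ => 1
  | 1, t => ∫ s in (0:ℝ)..t, Real.exp (a * s)
  | (n + 2), t => ∫ s in (0:ℝ)..t, Real.exp (-β * s) * nestInt β a (n + 1) s

/-- The iterated exponential integral
`I^ℓ_j(t) = β^ℓ ((j+ℓ-1)!/(j-1)!) e^{-βjt} ∫₀^t ∫₀^{s_ℓ} ⋯ ∫₀^{s_2}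
e^{-β(s_2+⋯+s_ℓ)} e^{β(j+ℓ-1)s_1} ds_1 ⋯ ds_ℓ`, with `I^0_j(t) = 1`. -/
noncomputable def Iex (β : ℝ) (j ℓ : ℕ) (t : ℝ) : ℝ :=
  if ℓ = 0 then 1
  else β ^ ℓ * ((Nat.factorial (j + ℓ - 1) : ℝ) / (Nat.factorial (j - 1) : ℝ)) *
    Real.exp (-(β * j * t)) * nestInt β (β * ((j : ℝ) + (ℓ : ℝ) - 1)) ℓ t

/-!
`I^ℓ_j(t)` is the probability that a Yule process of rate `β`, started from `j` individuals, has
reached size `j + ℓ` by time `t`. The only facts needed about it are the backward equation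
`(I^{ℓ+1}_j)' = βj (I^ℓ_{j+1} - I^{ℓ+1}_j)` and its boundary values. By the backward equation,
suitable combinations of the `I^ℓ_j` solve the hierarchy with equality, and the comparison principle
bounds `x_j` by them. The exponential smallness of `I^ℓ_j` is a Chernoff bound: `z^N` times the
generating function of the Yule process at `1/z` solves the same backward equation and dominates
the indicator of `{size ≥ N}`, and we take `z = 1 - e^{-βt}/2`.
-/

section

open Set
open scoped Nat

theorem nonpos_of_cascade {a b : ℝ} {m n : ℕ} {c d : ℕ → ℝ} {w w' : ℕ → ℝ → ℝ}
    (hc : ∀ k ∈ Ico m n, 0 ≤ c k)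
    (hderiv : ∀ k ∈ Ico m n, ∀ s ∈ Icc a b, HasDerivWithinAt (w k) (w' k s) (Icc a b) s)
    (hineq : ∀ k ∈ Ico m n, ∀ s ∈ Icc a b, w' k s ≤ c k * w (k + 1) s - d k * w k s)
    (hinit : ∀ k ∈ Ico m n, w k a ≤ 0) (htop : ∀ s ∈ Icc a b, w n s ≤ 0) :
    ∀ k ∈ Icc m n, ∀ s ∈ Icc a b, w k s ≤ 0 := by
  rintro k ⟨hmk, hkn⟩
  induction hkn using Nat.decreasingInduction with
  | self => exact htop
  | of_succ k hkn ih =>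
    have hk : k ∈ Ico m n := ⟨hmk, hkn⟩
    have hslope : ∀ s ∈ Ico a b, ∀ ρ, w' k s < ρ →
        ∃ᶠ z in nhdsWithin s (Ioi s), (z - s)⁻¹ * (w k z - w k s) < ρ := fun s hs _ hρ =>
      ((hderiv k hk s (Ico_subset_Icc_self hs)).mono_of_mem_nhdsWithin
        (Icc_mem_nhdsGE_of_mem hs)).liminf_right_slope_le hρ
    have hgrowth : ∀ s ∈ Ico a b, w' k s ≤ -d k * w k s + 0 := fun s hs => by
      have hs' := Ico_subset_Icc_self hs
      linarith [hineq k hk s hs', mul_nonpos_of_nonneg_of_nonpos (hc k hk) (ih (by omega) s hs')]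
    intro s hs
    simpa only [gronwallBound_ε0_δ0] using le_gronwallBound_of_liminf_deriv_right_le
      (fun u hu => (hderiv k hk u hu).continuousWithinAt) hslope (hinit k hk) hgrowth s hs

theorem le_of_hierarchy {β a b : ℝ} {m n : ℕ} {α r : ℕ → ℝ} {u u' v : ℕ → ℝ → ℝ} (hβ : 0 ≤ β)
    (hα : ∀ k ∈ Ico m n, 0 ≤ α k)
    (hderiv : ∀ k ∈ Ico m n, ∀ s ∈ Icc a b, HasDerivWithinAt (u k) (u' k s) (Icc a b) s)
    (hineq : ∀ k ∈ Ico m n, ∀ s ∈ Icc a b,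
      u' k s ≤ β * k * (α k * u (k + 1) s - u k s) + r k)
    (hsol : ∀ k ∈ Ico m n, ∀ s ∈ Icc a b,
      HasDerivAt (v k) (β * k * (α k * v (k + 1) s - v k s) + r k) s)
    (hinit : ∀ k ∈ Ico m n, u k a ≤ v k a) (htop : ∀ s ∈ Icc a b, u n s ≤ v n s) :
    ∀ k ∈ Icc m n, ∀ s ∈ Icc a b, u k s ≤ v k s := by
  have hdiff := nonpos_of_cascade (w := fun k s => u k s - v k s)
    (c := fun k => β * k * α k) (d := fun k => β * k)
    (fun k hk => mul_nonneg (by positivity) (hα k hk))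
    (fun k hk s hs => (hderiv k hk s hs).sub (hsol k hk s hs).hasDerivWithinAt)
    (fun k hk s hs => by linarith [hineq k hk s hs])
    (fun k hk => sub_nonpos.2 (hinit k hk)) (fun s hs => sub_nonpos.2 (htop s hs))
  exact fun k hk s hs => sub_nonpos.1 (hdiff k hk s hs)

theorem continuous_nestInt (β a : ℝ) : ∀ n, Continuous (nestInt β a n)
  | 0 => continuous_const
  | 1 => (intervalIntegral.differentiable_integral_of_continuous (by fun_prop)).continuous
  | n + 2 =>
    have := continuous_nestInt β a (n + 1)
    (intervalIntegral.differentiable_integral_of_continuous (by fun_prop)).continuous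

theorem nestInt_succ_zero (β a : ℝ) (n : ℕ) : nestInt β a (n + 1) 0 = 0 := by
  cases n <;> simp [nestInt]

theorem hasDerivAt_nestInt_one (β a s : ℝ) :
    HasDerivAt (nestInt β a 1) (Real.exp (a * s)) s :=
  ((by fun_prop : Continuous fun u : ℝ => Real.exp (a * u))
    |>.integral_hasStrictDerivAt 0 s).hasDerivAt

theorem hasDerivAt_nestInt_add_two (β a s : ℝ) (n : ℕ) :
    HasDerivAt (nestInt β a (n + 2)) (Real.exp (-β * s) * nestInt β a (n + 1) s) s := by
  have := continuous_nestInt β a (n + 1)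
  exact ((by fun_prop : Continuous fun u : ℝ => Real.exp (-β * u) * nestInt β a (n + 1) u)
    |>.integral_hasStrictDerivAt 0 s).hasDerivAt

theorem Iex_zero (β : ℝ) (j : ℕ) (t : ℝ) : Iex β j 0 t = 1 := if_pos rfl

theorem Iex_succ_succ (β : ℝ) (j ℓ : ℕ) (t : ℝ) :
    Iex β (j + 1) (ℓ + 1) t = β ^ (ℓ + 1) * ((j + ℓ + 1)! / j !) *
      Real.exp (-(β * (j + 1) * t)) * nestInt β (β * (j + ℓ + 1)) (ℓ + 1) t := by
  have hindex : j + 1 + (ℓ + 1) - 1 = j + ℓ + 1 := by omega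
  have hrate : (((j + 1 : ℕ) : ℝ) + ((ℓ + 1 : ℕ) : ℝ) - 1) = j + ℓ + 1 := by push_cast; ring
  rw [Iex, if_neg ℓ.succ_ne_zero, hindex, hrate, Nat.add_sub_cancel, Nat.cast_succ]

theorem hasDerivAt_nestInt_eq_Iex (β : ℝ) (j ℓ : ℕ) (s : ℝ) :
    HasDerivAt
      (fun t => β ^ ℓ * ((j + ℓ + 1)! / (j + 1)!) * nestInt β (β * (j + ℓ + 1)) (ℓ + 1) t)
      (Real.exp (β * (j + 1) * s) * Iex β (j + 2) ℓ s) s := by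
  cases ℓ with
  | zero =>
    have hfac : ((j + 1)! : ℝ) ≠ 0 := by positivity
    simpa [Iex_zero, hfac] using hasDerivAt_nestInt_one β (β * (j + 1)) s
  | succ n =>
    refine ((hasDerivAt_nestInt_add_two β (β * (j + (n + 1 : ℕ) + 1)) s n).const_mul _).congr_deriv
      ?_
    have hexp : Real.exp (-β * s)
        = Real.exp (β * (j + 1) * s) * Real.exp (-(β * ((j + 1 : ℕ) + 1) * s)) := by
      rw [← Real.exp_add]
      congr 1
      push_cast
      ring
    have hrate : (j : ℝ) + (n + 1 : ℕ) + 1 = (j + 1 : ℕ) + n + 1 := by push_cast; ring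
    rw [Iex_succ_succ, hexp, hrate, show j + (n + 1) + 1 = j + 1 + n + 1 by omega]
    ring

theorem hasDerivAt_Iex (β : ℝ) {j : ℕ} (hj : 1 ≤ j) (ℓ : ℕ) (s : ℝ) :
    HasDerivAt (Iex β j (ℓ + 1)) (β * j * (Iex β (j + 1) ℓ s - Iex β j (ℓ + 1) s)) s := by
  obtain ⟨i, rfl⟩ := Nat.exists_eq_add_of_le' hj
  let F : ℝ → ℝ := fun t =>
    β ^ ℓ * ((i + ℓ + 1)! / (i + 1)!) * nestInt β (β * (i + ℓ + 1)) (ℓ + 1) t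
  have hfactor : Iex β (i + 1) (ℓ + 1) =
      fun t => β * (i + 1) * (Real.exp (-(β * (i + 1) * t)) * F t) := by
    funext t
    have hfac : (i ! : ℝ) ≠ 0 := by positivity
    simp only [F, Iex_succ_succ, Nat.factorial_succ i, Nat.cast_mul, Nat.cast_succ]
    field_simp
    ring
  have hexp : HasDerivAt (fun t : ℝ => Real.exp (-(β * (i + 1) * t)))
      (Real.exp (-(β * (i + 1) * s)) * -(β * (i + 1))) s := by
    simpa using ((hasDerivAt_id s).const_mul (β * (i + 1))).neg.exp
  have hcancel : Real.exp (-(β * (i + 1) * s)) * Real.exp (β * (i + 1) * s) = 1 := by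
    rw [← Real.exp_add, neg_add_cancel, Real.exp_zero]
  rw [hfactor]
  refine ((hexp.mul (hasDerivAt_nestInt_eq_Iex β i ℓ s)).const_mul _).congr_deriv ?_
  push_cast
  linear_combination β * (i + 1) * Iex β (i + 2) ℓ s * hcancel

/-- The fundamental solution `A^{n-k}_k I^{n-k}_k` of the homogeneous hierarchy: the response at
level `k` to a constant unit input at level `n`. Indexing by the target level `n` instead of the
depth `n - k` makes the hierarchy act on `k` alone; only `k ≤ n` is meaningful. -/
noncomputable def hierarchyKernel (β : ℝ) (α : ℕ → ℝ) (k n : ℕ) (s : ℝ) : ℝ :=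
  (∏ i ∈ Finset.Ico k n, α i) * Iex β k (n - k) s

theorem hierarchyKernel_add (β : ℝ) (α : ℕ → ℝ) (j ℓ : ℕ) (s : ℝ) :
    hierarchyKernel β α j (j + ℓ) s = (∏ i ∈ Finset.range ℓ, α (j + i)) * Iex β j ℓ s := by
  rw [hierarchyKernel, Finset.prod_Ico_eq_prod_range, Nat.add_sub_cancel_left]

theorem hierarchyKernel_self (β : ℝ) (α : ℕ → ℝ) (k : ℕ) (s : ℝ) :
    hierarchyKernel β α k k s = 1 := by
  simp [hierarchyKernel, Iex_zero]

theorem hierarchyKernel_zero (β : ℝ) (α : ℕ → ℝ) {k n : ℕ} (hkn : k < n) :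
    hierarchyKernel β α k n 0 = 0 := by
  obtain ⟨ℓ, rfl⟩ := Nat.exists_eq_add_of_lt hkn
  simp [add_assoc, hierarchyKernel_add, Iex, nestInt_succ_zero]

theorem hasDerivAt_hierarchyKernel (β : ℝ) (α : ℕ → ℝ) {k n : ℕ} (hk : 1 ≤ k) (hkn : k < n)
    (s : ℝ) :
    HasDerivAt (hierarchyKernel β α k n)
      (β * k * (α k * hierarchyKernel β α (k + 1) n s - hierarchyKernel β α k n s)) s := by
  have hdepth : n - k = n - (k + 1) + 1 := by omega
  unfold hierarchyKernel
  rw [Finset.prod_eq_prod_Ico_succ_bot hkn, hdepth]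
  exact ((hasDerivAt_Iex β hk (n - (k + 1)) s).const_mul _).congr_deriv (by ring)

/-- The response at level `k < n` to the sources `r i`, `k ≤ i < n`: the solution of the hierarchy
with zero initial data and zero input at level `n`. -/
noncomputable def hierarchySource (β : ℝ) (α r : ℕ → ℝ) (k n : ℕ) (s : ℝ) : ℝ :=
  1 / β * ∑ i ∈ Finset.Ico k n, hierarchyKernel β α k (i + 1) s * (r i / (α i * i))

theorem hierarchySource_add (β : ℝ) (α r : ℕ → ℝ) (j ℓ : ℕ) (s : ℝ) :
    hierarchySource β α r j (j + ℓ) s =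
      1 / β * ∑ k ∈ Finset.range ℓ, (∏ i ∈ Finset.range (k + 1), α (j + i)) *
        Iex β j (k + 1) s * (r (j + k) / (α (j + k) * ((j : ℝ) + k))) := by
  simp only [hierarchySource, Finset.sum_Ico_eq_sum_range, Nat.add_sub_cancel_left, add_assoc,
    hierarchyKernel_add, Nat.cast_add]

theorem hierarchySource_self (β : ℝ) (α r : ℕ → ℝ) (k : ℕ) (s : ℝ) :
    hierarchySource β α r k k s = 0 := by
  simp [hierarchySource]

theorem hierarchySource_zero (β : ℝ) (α r : ℕ → ℝ) (k n : ℕ) :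
    hierarchySource β α r k n 0 = 0 := by
  rw [hierarchySource, Finset.sum_eq_zero, mul_zero]
  intro i hi
  rw [hierarchyKernel_zero β α (Nat.lt_succ_of_le (Finset.mem_Ico.1 hi).1), zero_mul]

theorem hasDerivAt_hierarchySource {β : ℝ} (hβ : β ≠ 0) {α : ℕ → ℝ} (r : ℕ → ℝ) {k n : ℕ}
    (hk : 1 ≤ k) (hkn : k < n) (hα : α k ≠ 0) (s : ℝ) :
    HasDerivAt (hierarchySource β α r k n)
      (β * k * (α k * hierarchySource β α r (k + 1) n s - hierarchySource β α r k n s) + r k)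
      s := by
  have hderiv := (HasDerivAt.fun_sum fun i (hi : i ∈ Finset.Ico k n) =>
    (hasDerivAt_hierarchyKernel β α hk (Nat.lt_succ_of_le (Finset.mem_Ico.1 hi).1) s).mul_const
      (r i / (α i * i))).const_mul (1 / β)
  refine hderiv.congr_deriv ?_
  have hk₀ : (k : ℝ) ≠ 0 := by positivity
  have hsplit : ∑ i ∈ Finset.Ico k n, hierarchyKernel β α (k + 1) (i + 1) s * (r i / (α i * i)) =
      r k / (α k * k) +
        ∑ i ∈ Finset.Ico (k + 1) n, hierarchyKernel β α (k + 1) (i + 1) s * (r i / (α i * i)) := by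
    rw [Finset.sum_eq_sum_Ico_succ_bot hkn, hierarchyKernel_self, one_mul]
  have hlinear : ∑ i ∈ Finset.Ico k n,
      β * k * (α k * hierarchyKernel β α (k + 1) (i + 1) s - hierarchyKernel β α k (i + 1) s) *
        (r i / (α i * i)) =
      β * k * (α k * ∑ i ∈ Finset.Ico k n,
          hierarchyKernel β α (k + 1) (i + 1) s * (r i / (α i * i)) -
        ∑ i ∈ Finset.Ico k n, hierarchyKernel β α k (i + 1) s * (r i / (α i * i))) := by
    simp only [Finset.mul_sum, ← Finset.sum_sub_distrib]
    exact Finset.sum_congr rfl fun i _ => by ring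
  rw [hlinear, hsplit, hierarchySource, hierarchySource]
  field_simp
  ring

/-- The solution of the hierarchy that is used as a barrier: zero initial data, sources `r`, and
input at level `n` equal to `M₀`, increased by `M₁` from time `t₀` on. It is meaningful for
`t₀ ≤ s`, and for all `0 ≤ s` if `M₁ = 0`. -/
noncomputable def hierarchyBarrier (β : ℝ) (α r : ℕ → ℝ) (t₀ M₁ M₀ : ℝ) (n k : ℕ) (s : ℝ) : ℝ :=
  hierarchyKernel β α k n (s - t₀) * M₁ + hierarchyKernel β α k n s * M₀ +
    hierarchySource β α r k n s

theorem hierarchyBarrier_self (β : ℝ) (α r : ℕ → ℝ) (t₀ M₁ M₀ : ℝ) (n : ℕ) (s : ℝ) :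
    hierarchyBarrier β α r t₀ M₁ M₀ n n s = M₁ + M₀ := by
  simp [hierarchyBarrier, hierarchyKernel_self, hierarchySource_self]

theorem hasDerivAt_hierarchyBarrier {β : ℝ} (hβ : β ≠ 0) {α : ℕ → ℝ} (r : ℕ → ℝ)
    (t₀ M₁ M₀ : ℝ) {k n : ℕ} (hk : 1 ≤ k) (hkn : k < n) (hα : α k ≠ 0) (s : ℝ) :
    HasDerivAt (hierarchyBarrier β α r t₀ M₁ M₀ n k)
      (β * k * (α k * hierarchyBarrier β α r t₀ M₁ M₀ n (k + 1) s -
        hierarchyBarrier β α r t₀ M₁ M₀ n k s) + r k) s := by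
  have hkernel := hasDerivAt_hierarchyKernel β α hk hkn
  refine (((((hkernel (s - t₀)).comp_sub_const s t₀).mul_const M₁).add
    ((hkernel s).mul_const M₀)).add
      (hasDerivAt_hierarchySource hβ r hk hkn hα s)).congr_deriv ?_
  simp only [hierarchyBarrier]
  ring

theorem le_hierarchyBarrier {β : ℝ} (hβ : 0 < β) {α r : ℕ → ℝ} {x x' : ℕ → ℝ → ℝ}
    {t₀ t M₁ M₀ : ℝ} (ht₀ : 0 ≤ t₀) (ht : t₀ ≤ t) {j n : ℕ} (hj : 1 ≤ j) (hjn : j ≤ n)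
    (hα : ∀ k ∈ Ico j n, 0 < α k) (hinit : ∀ k ∈ Ico j n, x k 0 ≤ 0)
    (hderiv : ∀ k ∈ Ico j n, ∀ s ∈ Icc 0 t, HasDerivWithinAt (x k) (x' k s) (Icc 0 t) s)
    (hineq : ∀ k ∈ Ico j n, ∀ s ∈ Icc 0 t,
      x' k s ≤ β * k * (α k * x (k + 1) s - x k s) + r k)
    (hM₀ : 0 ≤ M₀) (htop₀ : ∀ s ∈ Icc 0 t₀, x n s ≤ M₀) (htop₁ : ∀ s ∈ Icc t₀ t, x n s ≤ M₁) :
    x j t ≤ hierarchyBarrier β α r t₀ M₁ M₀ n j t := by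
  have hsub₀ : Icc 0 t₀ ⊆ Icc 0 t := Icc_subset_Icc_right ht
  have hsub₁ : Icc t₀ t ⊆ Icc 0 t := Icc_subset_Icc_left ht₀
  have hsol : ∀ M, ∀ k ∈ Ico j n, ∀ s, HasDerivAt (hierarchyBarrier β α r t₀ M M₀ n k) _ s :=
    fun M k hk s => hasDerivAt_hierarchyBarrier hβ.ne' r t₀ M M₀ (hj.trans hk.1) hk.2
      (hα k hk).ne' s
  have hbefore : ∀ k ∈ Icc j n, ∀ s ∈ Icc 0 t₀, x k s ≤ hierarchyBarrier β α r t₀ 0 M₀ n k s :=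
    le_of_hierarchy hβ.le (fun k hk => (hα k hk).le)
      (fun k hk s hs => (hderiv k hk s (hsub₀ hs)).mono hsub₀)
      (fun k hk s hs => hineq k hk s (hsub₀ hs)) (fun k hk s _ => hsol 0 k hk s)
      (fun k hk => by
        simpa [hierarchyBarrier, hierarchyKernel_zero β α hk.2, hierarchySource_zero]
          using hinit k hk)
      (fun s hs => by simpa [hierarchyBarrier_self] using htop₀ s hs)
  refine le_of_hierarchy hβ.le (fun k hk => (hα k hk).le)
      (fun k hk s hs => (hderiv k hk s (hsub₁ hs)).mono hsub₁)
      (fun k hk s hs => hineq k hk s (hsub₁ hs)) (fun k hk s _ => hsol M₁ k hk s)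
      (fun k hk => ?_) (fun s hs => ?_) j (left_mem_Icc.2 hjn) t (right_mem_Icc.2 ht)
  · simpa [hierarchyBarrier, hierarchyKernel_zero β α hk.2]
      using hbefore k (Ico_subset_Icc_self hk) t₀ (right_mem_Icc.2 ht₀)
  · rw [hierarchyBarrier_self]
    exact (htop₁ s hs).trans (le_add_of_nonneg_right hM₀)

theorem hasDerivAt_exp_div_exp_sub {β θ s : ℝ} (hθ : θ ≠ Real.exp (-(β * s))) :
    HasDerivAt (fun t => Real.exp (-(β * t)) / (Real.exp (-(β * t)) - θ))
      (β * (Real.exp (-(β * s)) / (Real.exp (-(β * s)) - θ)) *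
        (Real.exp (-(β * s)) / (Real.exp (-(β * s)) - θ) - 1)) s := by
  have hexp : HasDerivAt (fun t : ℝ => Real.exp (-(β * t))) (Real.exp (-(β * s)) * -β) s := by
    simpa using ((hasDerivAt_id s).const_mul β).neg.exp
  have hne : Real.exp (-(β * s)) - θ ≠ 0 := sub_ne_zero.2 hθ.symm
  refine (hexp.div (hexp.sub_const θ) hne).congr_deriv ?_
  field_simp
  ring

-- With `q = e^{-βτ}`, the generating function at `1 / (1 - θ)` is `(q / (q - θ)) ^ j`.
theorem Iex_le_chernoff {β θ τ : ℝ} (hβ : 0 ≤ β) (hτ : 0 ≤ τ) (hθ : 0 ≤ θ)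
    (hθτ : θ < Real.exp (-(β * τ))) {j : ℕ} (hj : 1 ≤ j) (ℓ : ℕ) :
    Iex β j ℓ τ ≤
      (1 - θ) ^ (j + ℓ) * (Real.exp (-(β * τ)) / (Real.exp (-(β * τ)) - θ)) ^ j := by
  have hθs : ∀ s ∈ Icc 0 τ, θ < Real.exp (-(β * s)) := fun s hs =>
    hθτ.trans_le (by gcongr; exact hs.2)
  have hexp_le : ∀ s ∈ Icc 0 τ, Real.exp (-(β * s)) ≤ 1 := fun s hs =>
    Real.exp_le_one_iff.2 (neg_nonpos.2 (mul_nonneg hβ hs.1))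
  have hθ1 : θ ≤ 1 := (hθτ.trans_le (hexp_le τ (right_mem_Icc.2 hτ))).le
  have hcompare := le_of_hierarchy (m := j) (n := j + ℓ) (α := fun _ => 1) (r := fun _ => 0)
    (u := fun k => hierarchyKernel β (fun _ => 1) k (j + ℓ))
    (v := fun k s => (1 - θ) ^ (j + ℓ) *
      (Real.exp (-(β * s)) / (Real.exp (-(β * s)) - θ)) ^ k) hβ (fun _ _ => zero_le_one)
    (fun k hk s _ =>
      (hasDerivAt_hierarchyKernel β _ (hj.trans hk.1) hk.2 s).hasDerivWithinAt)
    (fun k _ s _ => (add_zero _).ge) ?solution ?initial ?top j (by simp) τ (right_mem_Icc.2 hτ)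
  case solution =>
    intro k hk s hs
    refine (((hasDerivAt_exp_div_exp_sub (hθs s hs).ne).pow k).const_mul _).congr_deriv ?_
    obtain ⟨i, rfl⟩ := Nat.exists_eq_add_of_le' (hj.trans hk.1)
    push_cast [Nat.add_sub_cancel]
    ring
  case initial =>
    intro k hk
    have hden := sub_nonneg.2 (hθs 0 (left_mem_Icc.2 hτ)).le
    have hbase := sub_nonneg.2 hθ1
    rw [hierarchyKernel_zero β _ hk.2]
    exact mul_nonneg (pow_nonneg hbase _)
      (pow_nonneg (div_nonneg (Real.exp_pos _).le hden) _)
  case top =>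
    intro s hs
    have hden := sub_pos.2 (hθs s hs)
    rw [hierarchyKernel_self, ← mul_pow]
    refine one_le_pow₀ ?_
    rw [← mul_div_assoc, one_le_div hden]
    nlinarith [mul_le_mul_of_nonneg_left (hexp_le s hs) hθ]
  simpa [hierarchyKernel] using hcompare

theorem Iex_le_exp_sub {β τ : ℝ} (hβ : 0 ≤ β) (hτ : 0 ≤ τ) {j : ℕ} (hj : 1 ≤ j) (ℓ : ℕ) :
    Iex β j ℓ τ ≤ Real.exp (j - Real.exp (-(β * τ)) / 2 * ℓ) := by
  have hchernoff := Iex_le_chernoff hβ hτ (half_pos (Real.exp_pos _)).le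
    (half_lt_self (Real.exp_pos (-(β * τ)))) hj ℓ
  have hp1 : Real.exp (-(β * τ)) ≤ 1 :=
    Real.exp_le_one_iff.2 (neg_nonpos.2 (mul_nonneg hβ hτ))
  have hp0 := Real.exp_pos (-(β * τ))
  generalize Real.exp (-(β * τ)) = p at *
  have htwo : p / (p - p / 2) = 2 := by field_simp; norm_num
  calc Iex β j ℓ τ ≤ (1 - p / 2) ^ (j + ℓ) * 2 ^ j := by rwa [htwo] at hchernoff
    _ ≤ (1 - p / 2) ^ ℓ * 2 ^ j := by
      gcongr ?_ * _
      exact pow_le_pow_of_le_one (by linarith) (by linarith) (Nat.le_add_left ℓ j)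
    _ ≤ Real.exp (-(p / 2)) ^ ℓ * Real.exp 1 ^ j := by
      gcongr
      · linarith
      · exact Real.one_sub_le_exp_neg _
      · linarith [Real.add_one_le_exp 1]
    _ = Real.exp (j - p / 2 * ℓ) := by
      rw [← Real.exp_nat_mul, ← Real.exp_nat_mul, ← Real.exp_add]
      ring_nf

theorem Iex_le_exp_neg {β τ : ℝ} (hβ : 0 ≤ β) (hτ : 0 ≤ τ) {j ℓ : ℕ} (hj : 1 ≤ j)
    (hjℓ : j ≤ Real.exp (-(2 * β * τ) - 6) * ℓ) :
    Iex β j ℓ τ ≤ Real.exp (-(Real.exp (-(2 * β * τ) - 3) * ℓ)) := by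
  refine (Iex_le_exp_sub hβ hτ hj ℓ).trans (Real.exp_le_exp.2 ?_)
  have hquarter : Real.exp (-3) ≤ 1 / 4 := by
    rw [Real.exp_neg, one_div]
    exact inv_anti₀ (by norm_num) (by linarith [Real.add_one_le_exp 3])
  have hsq : Real.exp (-(2 * β * τ)) ≤ Real.exp (-(β * τ)) :=
    Real.exp_le_exp.2 (by linarith [mul_nonneg hβ hτ])
  have hdecay : Real.exp (-(2 * β * τ) - 3) ≤ Real.exp (-(β * τ)) / 4 := by
    rw [sub_eq_add_neg, Real.exp_add, div_eq_mul_one_div]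
    gcongr
  have hsix : Real.exp (-(2 * β * τ) - 6) ≤ Real.exp (-(β * τ)) / 4 :=
    (Real.exp_le_exp.2 (by linarith)).trans hdecay
  have hℓ : (0 : ℝ) ≤ ℓ := ℓ.cast_nonneg
  linarith [mul_le_mul_of_nonneg_right hdecay hℓ, mul_le_mul_of_nonneg_right hsix hℓ]

theorem ode_hierarchy_bound_exp_general {β : ℝ} (hβ : 0 < β) {x x' : ℕ → ℝ → ℝ} {r α : ℕ → ℝ}
    {t₀ t : ℝ} (ht₀ : 0 ≤ t₀) (ht : t₀ ≤ t) {j ℓ : ℕ} (hj : 1 ≤ j)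
    (hjℓ : (j : ℝ) ≤ Real.exp (-(2 * β * t) - 6) * ℓ)
    (hα : ∀ k ∈ Ico j (j + ℓ), 0 < α k) (hinit : ∀ k ∈ Ico j (j + ℓ), x k 0 ≤ 0)
    (hderiv : ∀ k ∈ Ico j (j + ℓ), ∀ s ∈ Icc 0 t,
      HasDerivWithinAt (x k) (x' k s) (Icc 0 t) s)
    (hineq : ∀ k ∈ Ico j (j + ℓ), ∀ s ∈ Icc 0 t,
      x' k s ≤ β * k * (α k * x (k + 1) s - x k s) + r k)
    (hcont : ContinuousOn (x (j + ℓ)) (Icc 0 t)) (hnonneg : ∀ s ∈ Icc 0 t, 0 ≤ x (j + ℓ) s) :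
    x j t ≤ (∏ i ∈ Finset.range ℓ, α (j + i)) *
        Real.exp (-(Real.exp (-(2 * β * (t - t₀)) - 3) * ℓ)) *
        sSup (x (j + ℓ) '' Icc t₀ t)
      + (∏ i ∈ Finset.range ℓ, α (j + i)) * Real.exp (2 * β * t + 7) *
          Real.exp (-(Real.exp (-(2 * β * t) - 7) * ℓ)) *
          sSup (x (j + ℓ) '' Icc 0 t₀)
      + 1 / β * ∑ k ∈ Finset.range ℓ, (∏ i ∈ Finset.range (k + 1), α (j + i)) *
          Iex β j (k + 1) t * (r (j + k) / (α (j + k) * ((j : ℝ) + k))) := by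
  have ht' : 0 ≤ t := ht₀.trans ht
  have hle₁ : ∀ s ∈ Icc t₀ t, x (j + ℓ) s ≤ sSup (x (j + ℓ) '' Icc t₀ t) := fun s hs =>
    (hcont.mono (Icc_subset_Icc_left ht₀)).le_sSup_image_Icc hs
  have hle₀ : ∀ s ∈ Icc 0 t₀, x (j + ℓ) s ≤ sSup (x (j + ℓ) '' Icc 0 t₀) := fun s hs =>
    (hcont.mono (Icc_subset_Icc_right ht)).le_sSup_image_Icc hs
  have hsup₁ := (hnonneg t ⟨ht', le_rfl⟩).trans (hle₁ t ⟨ht, le_rfl⟩)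
  have hsup₀ := (hnonneg 0 ⟨le_rfl, ht'⟩).trans (hle₀ 0 ⟨le_rfl, ht₀⟩)
  have hA : 0 ≤ ∏ i ∈ Finset.range ℓ, α (j + i) := Finset.prod_nonneg fun i hi =>
    (hα _ ⟨by omega, by simpa using hi⟩).le
  have hlate : Iex β j ℓ (t - t₀) ≤ Real.exp (-(Real.exp (-(2 * β * (t - t₀)) - 3) * ℓ)) :=
    Iex_le_exp_neg hβ.le (sub_nonneg.2 ht) hj (hjℓ.trans (by gcongr; linarith))
  have hearly : Iex β j ℓ t ≤
      Real.exp (2 * β * t + 7) * Real.exp (-(Real.exp (-(2 * β * t) - 7) * ℓ)) :=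
    calc Iex β j ℓ t ≤ Real.exp (-(Real.exp (-(2 * β * t) - 3) * ℓ)) :=
        Iex_le_exp_neg hβ.le ht' hj hjℓ
      _ ≤ Real.exp (-(Real.exp (-(2 * β * t) - 7) * ℓ)) := by gcongr; norm_num
      _ ≤ _ := le_mul_of_one_le_left (Real.exp_pos _).le (Real.one_le_exp (by positivity))
  calc x j t ≤ _ := le_hierarchyBarrier hβ ht₀ ht hj (Nat.le_add_right j ℓ) hα hinit hderiv hineq
        hsup₀ hle₀ hle₁
    _ ≤ _ := by
      rw [hierarchyBarrier, hierarchyKernel_add, hierarchyKernel_add, hierarchySource_add,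
        mul_assoc (∏ i ∈ Finset.range ℓ, α (j + i)) (Real.exp (2 * β * t + 7))]
      gcongr

end

/-- Iterable form of the hierarchy estimate: under the ODE hierarchy
`x_k' ≤ βk(α_k x_{k+1} − x_k) + r_k`, `x_k(0) = 0`, if `0 ≤ t₀ ≤ t` and
`j ≤ e^{-2βt-6}ℓ`, then
`x_j(t) ≤ A^ℓ_j exp(−e^{-2β(t−t₀)−3}ℓ) sup_{[t₀,t]} x_{j+ℓ}
  + A^ℓ_j e^{2βt+7} exp(−e^{-2βt−7}ℓ) sup_{[0,t₀]} x_{j+ℓ}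
  + (1/β) Σ_{k=0}^{ℓ-1} A^{k+1}_j I^{k+1}_j(t) r_{j+k}/(α_{j+k}(j+k))`. -/
theorem ode_hierarchy_bound_exp (β : ℝ) (hβ : 0 < β) (x x' : ℕ → ℝ → ℝ) (r α : ℕ → ℝ)
    (hx0 : ∀ k, 1 ≤ k → x k 0 = 0)
    (hxnonneg : ∀ k, 1 ≤ k → ∀ t : ℝ, 0 ≤ t → 0 ≤ x k t)
    (hr : ∀ k, 1 ≤ k → 0 ≤ r k)
    (hα : ∀ k, 1 ≤ k → 0 < α k)
    (hderiv : ∀ k, 1 ≤ k → ∀ t : ℝ, 0 ≤ t → HasDerivWithinAt (x k) (x' k t) (Set.Ici 0) t)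
    (hineq : ∀ k, 1 ≤ k → ∀ t : ℝ, 0 ≤ t →
      x' k t ≤ β * k * (α k * x (k + 1) t - x k t) + r k)
    (t₀ t : ℝ) (ht₀ : 0 ≤ t₀) (ht : t₀ ≤ t)
    (j ℓ : ℕ) (hj : 1 ≤ j) (hℓ : 1 ≤ ℓ)
    (hjl : (j : ℝ) ≤ Real.exp (-(2 * β * t) - 6) * (ℓ : ℝ)) :
    x j t ≤ (∏ i ∈ Finset.range ℓ, α (j + i)) *
        Real.exp (-(Real.exp (-(2 * β * (t - t₀)) - 3) * (ℓ : ℝ))) *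
        sSup (x (j + ℓ) '' Set.Icc t₀ t)
      + (∏ i ∈ Finset.range ℓ, α (j + i)) * Real.exp (2 * β * t + 7) *
          Real.exp (-(Real.exp (-(2 * β * t) - 7) * (ℓ : ℝ))) *
          sSup (x (j + ℓ) '' Set.Icc 0 t₀)
      + (1 / β) * ∑ k ∈ Finset.range ℓ,
          (∏ i ∈ Finset.range (k + 1), α (j + i)) * Iex β j (k + 1) t *
            (r (j + k) / (α (j + k) * ((j : ℝ) + k))) :=
  ode_hierarchy_bound_exp_general hβ ht₀ ht hj hjl (fun k hk => hα k (hj.trans hk.1))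
    (fun k hk => (hx0 k (hj.trans hk.1)).le)
    (fun k hk s hs => (hderiv k (hj.trans hk.1) s hs.1).mono Set.Icc_subset_Ici_self)
    (fun k hk s hs => hineq k (hj.trans hk.1) s hs.1)
    (fun s hs => ((hderiv _ (by omega) s hs.1).mono Set.Icc_subset_Ici_self).continuousWithinAt)
    (fun s hs => hxnonneg _ (by omega) s hs.1)
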